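/- Let Γ(x,t) = (4πt)^{−1} e^{−|x|²/(4t)} be the two-dimensional heat kernel and E(z) = (1/(2π)) log|z|. For x = (x₁,x₂) with x₂ ≥ 0, y = (y₁,y₂) with y₂ > 0, and t > 0, define the pressure tensor component P₁(x,y,t) = 4 ∂_{x₁} [ ∫_ℝ E(x₁ − z₁, x₂) · ∂_{y₂}Γ(z₁ − y₁, y₂, t) dz₁ ]. Then for every integer s ≥ 0 and all multi-indices k = (k₁,k₂) and m = (m₁,m₂) there exist constants C, c > 0 such that for all such x, y, t: |∂_t^s ∂_{x₁}^{k₁}∂_{x₂}^{k₂}∂_{y₁}^{m₁}∂_{y₂}^{m₂} P₁(x,y,t)| ≤ C t^{−1−s−m₂/2} (|x − y*|² + t)^{−(1+k₁+k₂+m₁)/2} e^{−c y₂²/t}, where y* = (y₁, −y₂). -/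

import Mathlib

/-- The two-dimensional heat kernel `Γ(x,t) = (4πt)⁻¹ e^{−|x|²/(4t)}`. -/
noncomputable def heatK (x₁ x₂ t : ℝ) : ℝ :=
  (4 * Real.pi * t)⁻¹ * Real.exp (-(x₁ ^ 2 + x₂ ^ 2) / (4 * t))

/-- The fundamental solution of the Laplacian on `ℝ²`: `E(z) = (1/2π) log|z|`. -/
noncomputable def Efun2 (z₁ z₂ : ℝ) : ℝ :=
  Real.log (Real.sqrt (z₁ ^ 2 + z₂ ^ 2)) / (2 * Real.pi)

/-- The pressure tensor component
`P₁(x,y,t) = 4 ∂_{x₁}[∫_ℝ E(x₁−z₁,x₂)·∂_{y₂}Γ(z₁−y₁,y₂,t) dz₁]` of the Stokes system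
in the half-plane with Navier boundary conditions. -/
noncomputable def Pten (x₁ x₂ y₁ y₂ t : ℝ) : ℝ :=
  4 * deriv (fun a =>
    ∫ z₁ : ℝ, Efun2 (a - z₁) x₂ * deriv (fun b => heatK (z₁ - y₁) b t) y₂) x₁

/-- Partial derivative operators on functions of five real variables
`(x₁, x₂, y₁, y₂, t)`. -/
noncomputable def DX1 (f : ℝ → ℝ → ℝ → ℝ → ℝ → ℝ) : ℝ → ℝ → ℝ → ℝ → ℝ → ℝ :=
  fun a b c d e => deriv (fun s => f s b c d e) a
noncomputable def DX2 (f : ℝ → ℝ → ℝ → ℝ → ℝ → ℝ) : ℝ → ℝ → ℝ → ℝ → ℝ → ℝ :=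
  fun a b c d e => deriv (fun s => f a s c d e) b
noncomputable def DY1 (f : ℝ → ℝ → ℝ → ℝ → ℝ → ℝ) : ℝ → ℝ → ℝ → ℝ → ℝ → ℝ :=
  fun a b c d e => deriv (fun s => f a b s d e) c
noncomputable def DY2 (f : ℝ → ℝ → ℝ → ℝ → ℝ → ℝ) : ℝ → ℝ → ℝ → ℝ → ℝ → ℝ :=
  fun a b c d e => deriv (fun s => f a b c s e) d
noncomputable def DT (f : ℝ → ℝ → ℝ → ℝ → ℝ → ℝ) : ℝ → ℝ → ℝ → ℝ → ℝ → ℝ :=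
  fun a b c d e => deriv (fun s => f a b c d s) e


open MeasureTheory Set Filter Topology

/-- If `v` takes values in `{0, φ}` to the right of `x`, then so does its derivative. -/
lemma junk_deriv {v φ : ℝ → ℝ} {φ' x : ℝ} (h : ∀ y, x ≤ y → v y = 0 ∨ v y = φ y)
    (hφ : HasDerivAt φ φ' x) : deriv v x = 0 ∨ deriv v x = φ' := by
  by_cases hd : DifferentiableAt ℝ v x
  swap
  · left; exact deriv_zero_of_not_differentiableAt hd
  by_contra hcon
  push Not at hcon
  obtain ⟨h0, h1⟩ := hcon
  have e1 := hd.hasDerivAt.eventually_ne (c := 0) h0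
  have e2 := (hd.hasDerivAt.sub hφ).eventually_ne (c := 0) (sub_ne_zero.mpr h1)
  have hle : 𝓝[>] x ≤ 𝓝[≠] x := nhdsWithin_mono _ (fun y hy => ne_of_gt hy)
  have e3 : ∀ᶠ y in 𝓝[>] x, x < y := eventually_mem_nhdsWithin
  obtain ⟨y, hy1, hy2, hy3⟩ := ((e1.filter_mono hle).and ((e2.filter_mono hle).and e3)).exists
  rcases h y hy3.le with h | h
  · exact hy1 h
  · exact hy2 (by simp [h])

/-- The integrand. -/
noncomputable def KK (n : ℕ) (ζ τ : ℂ) (ξ : ℝ) : ℂ :=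
  (ξ : ℂ) ^ n * Complex.exp (-ξ * ζ - ξ ^ 2 * τ)

/-- `F_n(ζ,τ) = ∫_0^∞ ξ^n e^{-ξζ-ξ²τ} dξ`. -/
noncomputable def FF (n : ℕ) (ζ τ : ℂ) : ℂ := ∫ ξ in Ioi (0:ℝ), KK n ζ τ ξ

lemma KK_norm (n : ℕ) (ζ τ : ℂ) {ξ : ℝ} (hξ : 0 < ξ) :
    ‖KK n ζ τ ξ‖ = ξ ^ n * Real.exp (-ξ * ζ.re - ξ ^ 2 * τ.re) := by
  unfold KK
  rw [norm_mul, norm_pow, Complex.norm_real, Real.norm_of_nonneg hξ.le, Complex.norm_exp]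
  congr 2
  simp [← Complex.ofReal_pow]

lemma bd_integrable (n : ℕ) (R : ℝ) {t : ℝ} (ht : 0 < t) :
    IntegrableOn (fun ξ : ℝ => ξ ^ n * Real.exp (R * ξ - ξ ^ 2 * t)) (Ioi 0) := by
  have h := ((integrable_rpow_mul_exp_neg_mul_sq (b := t / 2) (by positivity) (s := (n:ℝ))
    (by have := Nat.cast_nonneg (α := ℝ) n; linarith)).const_mul
      (Real.exp (R ^ 2 / (2 * t)))).integrableOn (s := Ioi 0)
  refine Integrable.mono' h (by fun_prop) ?_
  refine (ae_restrict_iff' measurableSet_Ioi).2 (ae_of_all _ fun ξ hξ => ?_)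
  have hξ' : (0:ℝ) < ξ := hξ
  rw [Real.norm_of_nonneg (by positivity), Real.rpow_natCast, mul_left_comm, ← Real.exp_add]
  gcongr
  have : R ^ 2 / (2 * t) + -(t / 2) * ξ ^ 2 - (R * ξ - ξ ^ 2 * t) = (R - t * ξ) ^ 2 / (2 * t) := by
    field_simp; ring
  have h2 : 0 ≤ (R - t * ξ) ^ 2 / (2 * t) := by positivity
  linarith

lemma KK_cont (n : ℕ) (ζ τ : ℂ) : Continuous (KK n ζ τ) := by
  unfold KK; fun_prop

lemma KK_integrable (n : ℕ) (ζ τ : ℂ) (ht : 0 < τ.re) : IntegrableOn (KK n ζ τ) (Ioi 0) := by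
  refine Integrable.mono' (bd_integrable n (-ζ.re) ht) (KK_cont n ζ τ).aestronglyMeasurable ?_
  refine (ae_restrict_iff' measurableSet_Ioi).2 (ae_of_all _ fun ξ hξ => ?_)
  rw [KK_norm n ζ τ hξ]
  apply le_of_eq; ring_nf

lemma FF_hasDerivAt_ζ (n : ℕ) (ζ τ : ℂ) (ht : 0 < τ.re) :
    HasDerivAt (fun z => FF n z τ) (-FF (n+1) ζ τ) ζ := by
  have := (hasDerivAt_integral_of_dominated_loc_of_deriv_le (μ := volume.restrict (Ioi (0:ℝ)))
    (F := fun z ξ => KK n z τ ξ) (x₀ := ζ) (s := Metric.ball ζ 1)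
    (F' := fun z ξ => -KK (n+1) z τ ξ)
    (bound := fun ξ => ξ ^ (n+1) * Real.exp ((1 - ζ.re) * ξ - ξ ^ 2 * τ.re))
    (Metric.ball_mem_nhds _ one_pos)
    (Eventually.of_forall fun z => (KK_cont n z τ).aestronglyMeasurable)
    (KK_integrable n ζ τ ht) (KK_cont (n+1) ζ τ).neg.aestronglyMeasurable ?_
    (bd_integrable (n+1) _ ht) ?_).2
  · rw [integral_neg] at this; exact this
  · refine (ae_restrict_iff' measurableSet_Ioi).2 (ae_of_all _ fun ξ hξ z hz => ?_)
    have hξ' : (0:ℝ) < ξ := hξ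
    rw [norm_neg, KK_norm _ _ _ hξ]
    refine mul_le_mul_of_nonneg_left (Real.exp_le_exp.2 ?_) (by positivity)
    have h1 : |(z - ζ).re| ≤ ‖z - ζ‖ := Complex.abs_re_le_norm _
    have h2 : ‖z - ζ‖ < 1 := by simpa [dist_eq_norm] using hz
    have h3 := (abs_le.1 h1).1
    rw [Complex.sub_re] at h3
    nlinarith
  · refine ae_of_all _ fun ξ z _ => ?_
    unfold KK
    have h : HasDerivAt (fun z : ℂ => -(ξ:ℂ) * z - ξ ^ 2 * τ) (-(ξ:ℂ)) z := by
      simpa using ((hasDerivAt_id z).const_mul (-(ξ:ℂ))).sub_const (ξ ^ 2 * τ)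
    exact ((h.cexp).const_mul ((ξ:ℂ)^n)).congr_deriv (by ring)

lemma FF_hasDerivAt_τ (n : ℕ) (ζ τ : ℂ) (ht : 0 < τ.re) :
    HasDerivAt (fun z => FF n ζ z) (-FF (n+2) ζ τ) τ := by
  have := (hasDerivAt_integral_of_dominated_loc_of_deriv_le (μ := volume.restrict (Ioi (0:ℝ)))
    (F := fun z ξ => KK n ζ z ξ) (x₀ := τ) (s := Metric.ball τ (τ.re / 2))
    (F' := fun z ξ => -KK (n+2) ζ z ξ)
    (bound := fun ξ => ξ ^ (n+2) * Real.exp ((- ζ.re) * ξ - ξ ^ 2 * (τ.re / 2)))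
    (Metric.ball_mem_nhds _ (by positivity))
    (Eventually.of_forall fun z => (KK_cont n ζ z).aestronglyMeasurable)
    (KK_integrable n ζ τ ht) (KK_cont (n+2) ζ τ).neg.aestronglyMeasurable ?_
    (bd_integrable (n+2) _ (by positivity)) ?_).2
  · rw [integral_neg] at this; exact this
  · refine (ae_restrict_iff' measurableSet_Ioi).2 (ae_of_all _ fun ξ hξ z hz => ?_)
    have hξ' : (0:ℝ) < ξ := hξ
    rw [norm_neg, KK_norm _ _ _ hξ]
    refine mul_le_mul_of_nonneg_left (Real.exp_le_exp.2 ?_) (by positivity)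
    have h1 : |(z - τ).re| ≤ ‖z - τ‖ := Complex.abs_re_le_norm _
    have h2 : ‖z - τ‖ < τ.re / 2 := by simpa [dist_eq_norm] using hz
    have h3 := (abs_le.1 h1).1
    rw [Complex.sub_re] at h3
    nlinarith [pow_pos hξ' 2]
  · refine ae_of_all _ fun ξ z _ => ?_
    unfold KK
    have h : HasDerivAt (fun z : ℂ => -(ξ:ℂ) * ζ - ξ ^ 2 * z) (-(ξ:ℂ)^2) z := by
      simpa using ((hasDerivAt_id z).const_mul ((ξ:ℂ)^2)).const_sub (-(ξ:ℂ) * ζ)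
    exact ((h.cexp).const_mul ((ξ:ℂ)^n)).congr_deriv (by ring)

lemma KK_succ_deriv (n : ℕ) (ζ τ : ℂ) (ξ : ℝ) :
    HasDerivAt (KK (n+1) ζ τ)
      ((n+1) * KK n ζ τ ξ - ζ * KK (n+1) ζ τ ξ - 2 * τ * KK (n+2) ζ τ ξ) ξ := by
  have h : HasDerivAt (fun z : ℂ => -z * ζ - z ^ 2 * τ) (-ζ - 2 * ξ * τ) (ξ:ℂ) := by
    exact (((hasDerivAt_id (ξ:ℂ)).neg.mul_const ζ).sub (((hasDerivAt_pow 2 (ξ:ℂ))).mul_const τ)).congr_deriv (by simp)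
  have h2 := ((hasDerivAt_pow (n+1) (ξ:ℂ)).mul h.cexp).comp_ofReal
  unfold KK
  refine h2.congr_deriv ?_
  push_cast
  simp
  ring

lemma KK_zero_deriv (ζ τ : ℂ) (ξ : ℝ) :
    HasDerivAt (KK 0 ζ τ) (- ζ * KK 0 ζ τ ξ - 2 * τ * KK 1 ζ τ ξ) ξ := by
  have h : HasDerivAt (fun z : ℂ => -z * ζ - z ^ 2 * τ) (-ζ - 2 * ξ * τ) (ξ:ℂ) := by
    exact (((hasDerivAt_id (ξ:ℂ)).neg.mul_const ζ).sub (((hasDerivAt_pow 2 (ξ:ℂ))).mul_const τ)).congr_deriv (by simp)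
  have h2 := (h.cexp).comp_ofReal
  unfold KK
  simp only [pow_zero, one_mul]
  exact h2.congr_deriv (by ring)

lemma FF_rec_succ (n : ℕ) (ζ τ : ℂ) (ht : 0 < τ.re) :
    ζ * FF (n+1) ζ τ = (n+1) * FF n ζ τ - 2 * τ * FF (n+2) ζ τ := by
  have i0 := KK_integrable n ζ τ ht
  have i1 := KK_integrable (n+1) ζ τ ht
  have i2 := KK_integrable (n+2) ζ τ ht
  have hi : IntegrableOn (fun ξ => (n+1) * KK n ζ τ ξ - ζ * KK (n+1) ζ τ ξ - 2 * τ * KK (n+2) ζ τ ξ)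
      (Ioi 0) := ((i0.const_mul _).sub (i1.const_mul _)).sub (i2.const_mul _)
  have hl := tendsto_zero_of_hasDerivAt_of_integrableOn_Ioi
    (fun ξ _ => KK_succ_deriv n ζ τ ξ) hi i1
  have := integral_Ioi_of_hasDerivAt_of_tendsto (KK_cont _ _ _).continuousWithinAt
    (fun ξ _ => KK_succ_deriv n ζ τ ξ) hi hl
  rw [integral_sub (f := fun ξ => (n+1) * KK n ζ τ ξ - ζ * KK (n+1) ζ τ ξ) ((i0.const_mul _).sub (i1.const_mul _)) (i2.const_mul _),
    integral_sub (i0.const_mul _) (i1.const_mul _)] at this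
  simp only [integral_const_mul] at this
  have h0 : KK (n+1) ζ τ 0 = 0 := by simp [KK]
  rw [h0] at this
  unfold FF
  linear_combination -this

lemma FF_rec_zero (ζ τ : ℂ) (ht : 0 < τ.re) :
    ζ * FF 0 ζ τ = 1 - 2 * τ * FF 1 ζ τ := by
  have i1 := KK_integrable 0 ζ τ ht
  have i2 := KK_integrable 1 ζ τ ht
  have hi : IntegrableOn (fun ξ => - ζ * KK 0 ζ τ ξ - 2 * τ * KK 1 ζ τ ξ)
      (Ioi 0) := ((i1.const_mul _)).sub (i2.const_mul _)
  have hl := tendsto_zero_of_hasDerivAt_of_integrableOn_Ioi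
    (fun ξ _ => KK_zero_deriv ζ τ ξ) hi i1
  have := integral_Ioi_of_hasDerivAt_of_tendsto (KK_cont _ _ _).continuousWithinAt
    (fun ξ _ => KK_zero_deriv ζ τ ξ) hi hl
  rw [integral_sub (i1.const_mul _) (i2.const_mul _)] at this
  simp only [integral_const_mul] at this
  have h0 : KK 0 ζ τ 0 = 1 := by simp [KK]
  rw [h0] at this
  unfold FF
  linear_combination -this

lemma FF_bound0 (n : ℕ) : ∃ C > (0:ℝ), ∀ (ζ : ℂ) (t : ℝ), 0 ≤ ζ.re → 0 < t →
    √t ^ (n+1) * ‖FF n ζ t‖ ≤ C := by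
  refine ⟨1 / 2 * Real.Gamma ((n + 1) / 2), by positivity, fun ζ t hζ ht => ?_⟩
  have hn : (-1:ℝ) < n := by have := Nat.cast_nonneg (α := ℝ) n; linarith
  have key : ‖FF n ζ t‖ ≤ ∫ ξ in Ioi (0:ℝ), ξ ^ (n:ℝ) * Real.exp (-t * ξ ^ (2:ℝ)) := by
    unfold FF
    apply norm_integral_le_of_norm_le
    · have := (integrable_rpow_mul_exp_neg_mul_sq (b := t) ht hn).integrableOn (s := Ioi 0)
      simpa [IntegrableOn] using this
    · refine (ae_restrict_iff' measurableSet_Ioi).2 (ae_of_all _ fun ξ hξ => ?_)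
      have hξ' : (0:ℝ) < ξ := hξ
      rw [KK_norm n ζ t hξ, Real.rpow_natCast, Real.rpow_two]
      gcongr
      simp only [Complex.ofReal_re]
      nlinarith [mul_nonneg hξ'.le hζ]
  rw [integral_rpow_mul_exp_neg_mul_rpow (by norm_num) hn ht] at key
  calc √t ^ (n+1) * ‖FF n ζ t‖ ≤ √t ^ (n+1) * (t ^ (-((n:ℝ) + 1) / 2) * (1 / 2) * Real.Gamma ((n + 1) / 2)) := by gcongr
    _ = (√t ^ (n+1) * t ^ (-((n:ℝ) + 1) / 2)) * (1 / 2 * Real.Gamma ((n + 1) / 2)) := by ring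
    _ = 1 / 2 * Real.Gamma ((n + 1) / 2) := by
      rw [Real.sqrt_eq_rpow, ← Real.rpow_natCast, ← Real.rpow_mul ht.le, ← Real.rpow_add ht]
      push_cast
      rw [show 1 / 2 * ((n:ℝ) + 1) + -((n:ℝ) + 1) / 2 = 0 by ring, Real.rpow_zero, one_mul]

lemma FF_bound1 (j : ℕ) : ∀ n m : ℕ, j + m = n + 1 → ∃ C > (0:ℝ), ∀ (ζ : ℂ) (t : ℝ), 0 ≤ ζ.re →
    0 < t → ‖ζ‖ ^ j * √t ^ m * ‖FF n ζ t‖ ≤ C := by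
  induction j with
  | zero =>
    intro n m h
    obtain rfl : m = n + 1 := by omega
    simpa using FF_bound0 n
  | succ j ih =>
    intro n m h
    rcases n with _ | n
    · obtain rfl : j = 0 := by omega
      obtain rfl : m = 0 := by omega
      obtain ⟨C, hC, hb⟩ := FF_bound0 1
      refine ⟨1 + 2 * C, by positivity, fun ζ t hζ ht => ?_⟩
      have hr := FF_rec_zero ζ t (by simpa using ht)
      have := hb ζ t hζ ht
      rw [show (1+1) = 2 from rfl, Real.sq_sqrt ht.le] at this
      calc ‖ζ‖ ^ (0+1) * √t ^ 0 * ‖FF 0 ζ t‖ = ‖ζ * FF 0 ζ t‖ := by simp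
        _ ≤ 1 + 2 * (t * ‖FF 1 ζ t‖) := by
          rw [hr]
          refine (norm_sub_le _ _).trans (le_of_eq ?_)
          simp [abs_of_pos ht, mul_assoc]
        _ ≤ _ := by gcongr
    · obtain ⟨C1, hC1, h1⟩ := ih n m (by omega)
      obtain ⟨C2, hC2, h2⟩ := ih (n+2) (m+2) (by omega)
      refine ⟨(n+1) * C1 + 2 * C2, by positivity, fun ζ t hζ ht => ?_⟩
      have hr := FF_rec_succ n ζ t (by simpa using ht)
      have b1 := h1 ζ t hζ ht
      have b2 := h2 ζ t hζ ht
      rw [pow_add (√t) m 2, Real.sq_sqrt ht.le] at b2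
      have e : ‖ζ‖ * ‖FF (n+1) ζ t‖ ≤ (n+1) * ‖FF n ζ t‖ + 2 * t * ‖FF (n+2) ζ t‖ := by
        rw [← norm_mul, hr]
        refine (norm_sub_le _ _).trans (le_of_eq ?_)
        have : ‖(n:ℂ) + 1‖ = n + 1 := by
          exact_mod_cast Complex.norm_natCast (n+1)
        simp [abs_of_pos ht, this]
      calc ‖ζ‖ ^ (j+1) * √t ^ m * ‖FF (n+1) ζ t‖
          = ‖ζ‖ ^ j * √t ^ m * (‖ζ‖ * ‖FF (n+1) ζ t‖) := by ring
        _ ≤ ‖ζ‖ ^ j * √t ^ m * ((n+1) * ‖FF n ζ t‖ + 2 * t * ‖FF (n+2) ζ t‖) := by gcongr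
        _ = (n+1) * (‖ζ‖ ^ j * √t ^ m * ‖FF n ζ t‖)
            + 2 * (‖ζ‖ ^ j * (√t ^ m * t) * ‖FF (n+2) ζ t‖) := by ring
        _ ≤ _ := by gcongr

lemma FF_bound (n : ℕ) : ∃ C > (0:ℝ), ∀ (ζ : ℂ) (t : ℝ), 0 ≤ ζ.re → 0 < t →
    ‖FF n ζ t‖ ≤ C * (‖ζ‖ ^ 2 + t) ^ (-(((n:ℝ) + 1) / 2)) := by
  obtain ⟨C1, hC1, h1⟩ := FF_bound1 (n+1) n 0 rfl
  obtain ⟨C2, hC2, h2⟩ := FF_bound0 n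
  refine ⟨2 ^ n * (C1 + C2), by positivity, fun ζ t hζ ht => ?_⟩
  have b1 := h1 ζ t hζ ht
  have b2 := h2 ζ t hζ ht
  rw [pow_zero, mul_one] at b1
  have hpos : 0 < ‖ζ‖ ^ 2 + t := by positivity
  rw [Real.rpow_neg hpos.le, ← div_eq_mul_inv, le_div_iff₀ (by positivity)]
  have hs : (‖ζ‖ ^ 2 + t) ^ (((n:ℝ) + 1) / 2) ≤ (‖ζ‖ + √t) ^ (n+1) := by
    rw [show ((n:ℝ) + 1) / 2 = 1 / 2 * ((n+1 : ℕ) : ℝ) by push_cast; ring, Real.rpow_mul hpos.le,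
      ← Real.sqrt_eq_rpow, Real.rpow_natCast]
    gcongr
    apply Real.sqrt_le_iff.2 ⟨by positivity, ?_⟩
    nlinarith [Real.sq_sqrt ht.le, mul_nonneg (norm_nonneg ζ) (Real.sqrt_nonneg t)]
  have hp := add_pow_le (norm_nonneg ζ) (Real.sqrt_nonneg t) (n+1)
  simp only [Nat.add_sub_cancel] at hp
  calc ‖FF n ζ t‖ * (‖ζ‖ ^ 2 + t) ^ (((n:ℝ) + 1) / 2)
      ≤ ‖FF n ζ t‖ * (2 ^ n * (‖ζ‖ ^ (n+1) + √t ^ (n+1))) := by gcongr; exact hs.trans hp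
    _ = 2 ^ n * (‖ζ‖ ^ (n+1) * ‖FF n ζ t‖ + √t ^ (n+1) * ‖FF n ζ t‖) := by ring
    _ ≤ _ := by gcongr

/-- The logarithmic potential of the (unnormalised) one-dimensional heat kernel. -/
noncomputable def JJ (x t w : ℝ) : ℝ :=
  ∫ z : ℝ, Real.log (√((w - z) ^ 2 + x ^ 2)) * Real.exp (-(z ^ 2) / (4 * t))

lemma log_bd {u x : ℝ} (hu : u ≠ 0) (hx : 0 ≤ x) :
    |Real.log (√(u ^ 2 + x ^ 2))| ≤ |Real.log u| + |u| + x := by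
  have hu' : 0 < |u| := abs_pos.2 hu
  have h1 : |u| ≤ √(u ^ 2 + x ^ 2) := by
    rw [← Real.sqrt_sq_eq_abs]
    exact Real.sqrt_le_sqrt (by nlinarith)
  have h2 : √(u ^ 2 + x ^ 2) ≤ |u| + x := by
    apply Real.sqrt_le_iff.2 ⟨by positivity, ?_⟩
    nlinarith [sq_abs u, mul_nonneg hu'.le hx]
  have h3 : Real.log u ≤ Real.log (√(u ^ 2 + x ^ 2)) := by
    rw [← Real.log_abs u]
    exact Real.log_le_log hu' h1
  have h4 := Real.log_le_sub_one_of_pos (lt_of_lt_of_le hu' h1)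
  rw [abs_le]
  constructor
  · have := neg_abs_le (Real.log u)
    linarith
  · have := abs_nonneg (Real.log u)
    linarith

lemma log_bd2 (u : ℝ) : |Real.log u| ≤ (Icc (-1:ℝ) 1).indicator (fun v => |Real.log v|) u + |u| := by
  by_cases h : u ∈ Icc (-1:ℝ) 1
  · rw [indicator_of_mem h]; linarith [abs_nonneg u]
  · rw [indicator_of_notMem h, zero_add, ← Real.log_abs]
    have h1 : 1 ≤ |u| := by
      by_contra hc
      push Not at hc
      exact h (abs_le.1 hc.le)
    rw [abs_of_nonneg (Real.log_nonneg h1)]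
    have := Real.log_le_sub_one_of_pos (by linarith : 0 < |u|)
    linarith

lemma gauss_int {t : ℝ} (ht : 0 < t) : Integrable (fun z : ℝ => Real.exp (-(z ^ 2) / (4 * t))) := by
  have := integrable_exp_neg_mul_sq (b := 1 / (4 * t)) (by positivity)
  refine this.congr (ae_of_all _ fun z => ?_)
  simp only
  congr 1; ring

lemma gauss_int1 {t : ℝ} (ht : 0 < t) :
    Integrable (fun z : ℝ => |z| * Real.exp (-(z ^ 2) / (4 * t))) := by
  have := (integrable_mul_exp_neg_mul_sq (b := 1 / (4 * t)) (by positivity)).abs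
  refine this.congr (ae_of_all _ fun z => ?_)
  simp only [abs_mul, Real.abs_exp]
  congr 2; ring

lemma dom_int (w X : ℝ) {t : ℝ} (ht : 0 < t) :
    Integrable (fun z : ℝ => (|Real.log (w - z)| + |w - z| + X) * Real.exp (-(z ^ 2) / (4 * t))) := by
  have hI : Integrable ((Icc (-1:ℝ) 1).indicator (fun v => |Real.log v|)) := by
    rw [integrable_indicator_iff measurableSet_Icc]
    have := (intervalIntegral.intervalIntegrable_log' (a := -1) (b := 1)).abs
    rwa [intervalIntegrable_iff_integrableOn_Icc_of_le (by norm_num)] at this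
  have hI2 := hI.comp_sub_left w
  have hb := (hI2.add ((gauss_int ht).const_mul (2 * |w| + |X|))).add ((gauss_int1 ht).const_mul 2)
  refine Integrable.mono' hb ?_ (ae_of_all _ fun z => ?_)
  · apply Measurable.aestronglyMeasurable
    have : Measurable fun z : ℝ => Real.log (w - z) := Real.measurable_log.comp (by fun_prop)
    have h2 : Measurable fun z : ℝ => |Real.log (w - z)| := this.abs
    fun_prop
  · have he : Real.exp (-(z ^ 2) / (4 * t)) ≤ 1 := by
      apply Real.exp_le_one_iff.2
      rw [neg_div]
      have : 0 ≤ z ^ 2 / (4 * t) := by positivity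
      linarith
    have he0 := Real.exp_pos (-(z ^ 2) / (4 * t))
    set e := Real.exp (-(z ^ 2) / (4 * t))
    have h1 := log_bd2 (w - z)
    have hi : 0 ≤ (Icc (-1:ℝ) 1).indicator (fun v => |Real.log v|) (w - z) :=
      indicator_nonneg (fun _ _ => abs_nonneg _) _
    simp only [Pi.add_apply]
    set i := (Icc (-1:ℝ) 1).indicator (fun v => |Real.log v|) (w - z)
    have h2 : |w - z| ≤ |w| + |z| := abs_sub w z
    rw [norm_mul, Real.norm_eq_abs, Real.norm_of_nonneg he0.le]
    have h3 : |(|Real.log (w - z)| + |w - z| + X)| ≤ |Real.log (w - z)| + |w - z| + |X| := by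
      refine (abs_add_le _ _).trans ?_
      rw [abs_of_nonneg (by positivity : 0 ≤ |Real.log (w - z)| + |w - z|)]
    calc |(|Real.log (w - z)| + |w - z| + X)| * e ≤ (i + (2 * |w| + |X|) + 2 * |z|) * e := by
          gcongr
          linarith
      _ ≤ i + (2 * |w| + |X|) * e + 2 * (|z| * e) := by nlinarith

lemma ae_ne_sub (w : ℝ) : ∀ᵐ z : ℝ, w - z ≠ 0 := by
  have : ∀ᵐ z : ℝ, z ≠ w := by
    simp [ae_iff, measure_singleton]
  filter_upwards [this] with z hz
  exact sub_ne_zero.2 hz.symm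

lemma logint_meas (x w t : ℝ) : AEStronglyMeasurable
    (fun z : ℝ => Real.log (√((w - z) ^ 2 + x ^ 2)) * Real.exp (-(z ^ 2) / (4 * t))) volume := by
  apply Measurable.aestronglyMeasurable
  have : Measurable fun z : ℝ => Real.log (√((w - z) ^ 2 + x ^ 2)) :=
    Real.measurable_log.comp (by fun_prop)
  fun_prop

lemma logint_bd (w t : ℝ) {x X : ℝ} (hx : 0 ≤ x) (hX : x ≤ X) : ∀ᵐ z : ℝ,
    ‖Real.log (√((w - z) ^ 2 + x ^ 2)) * Real.exp (-(z ^ 2) / (4 * t))‖ ≤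
      (|Real.log (w - z)| + |w - z| + X) * Real.exp (-(z ^ 2) / (4 * t)) := by
  filter_upwards [ae_ne_sub w] with z hz
  rw [norm_mul, Real.norm_eq_abs, Real.norm_of_nonneg (Real.exp_pos _).le]
  gcongr
  exact (log_bd hz hx).trans (by linarith)

lemma logint_int {x t : ℝ} (w : ℝ) (hx : 0 ≤ x) (ht : 0 < t) : Integrable
    (fun z : ℝ => Real.log (√((w - z) ^ 2 + x ^ 2)) * Real.exp (-(z ^ 2) / (4 * t))) :=
  Integrable.mono' (dom_int w x ht) (logint_meas x w t) (logint_bd w t hx le_rfl)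

lemma frac_bd {x u : ℝ} (hx : 0 < x) : |u / (u ^ 2 + x ^ 2)| ≤ 1 / x := by
  rw [abs_div, abs_of_pos (by positivity : 0 < u ^ 2 + x ^ 2), div_le_div_iff₀ (by positivity) hx]
  nlinarith [sq_nonneg (|u| - x), sq_abs u, abs_nonneg u]

lemma JJ_deriv_pos {x t : ℝ} (w : ℝ) (hx : 0 < x) (ht : 0 < t) :
    HasDerivAt (JJ x t)
      (∫ z : ℝ, (w - z) / ((w - z) ^ 2 + x ^ 2) * Real.exp (-(z ^ 2) / (4 * t))) w := by
  refine (hasDerivAt_integral_of_dominated_loc_of_deriv_le (μ := volume)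
    (F := fun w z => Real.log (√((w - z) ^ 2 + x ^ 2)) * Real.exp (-(z ^ 2) / (4 * t)))
    (x₀ := w) (s := univ)
    (F' := fun w z => (w - z) / ((w - z) ^ 2 + x ^ 2) * Real.exp (-(z ^ 2) / (4 * t)))
    (bound := fun z => 1 / x * Real.exp (-(z ^ 2) / (4 * t)))
    univ_mem
    (Eventually.of_forall fun w => logint_meas x w t)
    (logint_int w hx.le ht) ?_ ?_
    ((gauss_int ht).const_mul _) ?_).2
  · apply Measurable.aestronglyMeasurable
    fun_prop
  · refine ae_of_all _ fun z v _ => ?_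
    rw [norm_mul, Real.norm_eq_abs, Real.norm_of_nonneg (Real.exp_pos _).le]
    gcongr
    exact frac_bd hx
  · refine ae_of_all _ fun z v _ => ?_
    refine HasDerivAt.mul_const ?_ _
    have hp : 0 < (v - z) ^ 2 + x ^ 2 := by positivity
    have h1 : HasDerivAt (fun v => (v - z) ^ 2 + x ^ 2) (2 * (v - z)) v := by
      exact ((((hasDerivAt_id v).sub_const z).pow 2).add_const (x ^ 2)).congr_deriv (by simp)
    have h2 := (h1.log hp.ne').div_const 2
    have h3 : (fun v => Real.log (√((v - z) ^ 2 + x ^ 2))) =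
        fun v => Real.log ((v - z) ^ 2 + x ^ 2) / 2 := by
      funext v
      rw [Real.log_sqrt (by positivity)]
    rw [h3]
    exact h2.congr_deriv (by field_simp)

lemma fubini_FF {x t : ℝ} (w : ℝ) (hx : 0 < x) (ht : 0 < t) :
    ∫ z : ℝ, (1 / ((x : ℂ) - Complex.I * ((w - z : ℝ) : ℂ))) * (Real.exp (-(z ^ 2) / (4 * t)) : ℂ)
      = (√(4 * Real.pi * t) : ℂ) * FF 0 ((x : ℂ) - Complex.I * (w : ℂ)) t := by
  have hinner : ∀ z : ℝ, ∫ ξ in Ioi (0:ℝ),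
      Complex.exp (-((x : ℂ) - Complex.I * ((w - z : ℝ) : ℂ)) * ξ)
        * (Real.exp (-(z ^ 2) / (4 * t)) : ℂ) =
      (1 / ((x : ℂ) - Complex.I * ((w - z : ℝ) : ℂ))) * (Real.exp (-(z ^ 2) / (4 * t)) : ℂ) := by
    intro z
    rw [integral_mul_const, integral_exp_mul_complex_Ioi (by simpa using hx),
      Complex.ofReal_zero, mul_zero, Complex.exp_zero, neg_div_neg_eq]
  simp_rw [← hinner]
  rw [integral_integral_swap]
  · unfold FF
    rw [← integral_const_mul]
    refine setIntegral_congr_fun measurableSet_Ioi fun ξ hξ => ?_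
    have hg := fourierIntegral_gaussian (b := ((1 / (4 * t) : ℝ) : ℂ))
      (by rw [Complex.ofReal_re]; positivity) (-(ξ:ℂ))
    have e1 : ∀ z : ℝ, Complex.exp (-((x : ℂ) - Complex.I * ((w - z : ℝ) : ℂ)) * ξ)
        * (Real.exp (-(z ^ 2) / (4 * t)) : ℂ) =
        Complex.exp (-(ξ:ℂ) * (x - Complex.I * w)) * (Complex.exp (Complex.I * (-(ξ:ℂ)) * z) *
          Complex.exp (-((1 / (4 * t) : ℝ) : ℂ) * (z:ℂ) ^ 2)) := by
      intro z
      rw [Complex.ofReal_exp, ← Complex.exp_add, ← Complex.exp_add, ← Complex.exp_add]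
      congr 1
      push_cast
      ring
    simp only [e1]
    rw [integral_const_mul, hg]
    have e2 : ((Real.pi : ℂ) / ((1 / (4 * t) : ℝ) : ℂ)) ^ (1 / 2 : ℂ) = (√(4 * Real.pi * t) : ℂ) := by
      rw [Real.sqrt_eq_rpow, Complex.ofReal_cpow (by positivity)]
      congr 1
      · push_cast; field_simp
      · push_cast; rfl
    have ht' : (t:ℂ) ≠ 0 := by exact_mod_cast ht.ne'
    rw [e2, mul_left_comm, ← Complex.exp_add]
    unfold KK
    rw [pow_zero, one_mul]
    congr 2
    push_cast
    field_simp
    ring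
  · have hprod : Integrable (fun p : ℝ × ℝ => Real.exp (-(p.1 ^ 2) / (4 * t)) * Real.exp (-x * p.2))
        (volume.prod (volume.restrict (Ioi (0:ℝ)))) :=
      (gauss_int ht).mul_prod (exp_neg_integrableOn_Ioi 0 hx)
    refine Integrable.mono' hprod ?_ (ae_of_all _ fun p => ?_)
    · apply Continuous.aestronglyMeasurable
      unfold Function.uncurry
      fun_prop
    · simp only [Function.uncurry]
      rw [norm_mul, Complex.norm_exp, Complex.norm_real, Real.norm_of_nonneg (Real.exp_pos _).le,
        mul_comm]
      apply le_of_eq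
      congr 2
      simp

lemma fubini_im {x t : ℝ} (w : ℝ) (hx : 0 < x) (ht : 0 < t) :
    ∫ z : ℝ, (w - z) / ((w - z) ^ 2 + x ^ 2) * Real.exp (-(z ^ 2) / (4 * t))
      = √(4 * Real.pi * t) * (FF 0 ((x : ℂ) - Complex.I * (w : ℂ)) t).im := by
  have h := congrArg Complex.im (fubini_FF w hx ht)
  rw [Complex.im_ofReal_mul] at h
  rw [← h]
  have hp : ∀ z : ℝ, (1 / ((x : ℂ) - Complex.I * ((w - z : ℝ) : ℂ))).im
      = (w - z) / ((w - z) ^ 2 + x ^ 2) := by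
    intro z
    simp [Complex.normSq_apply]
    ring_nf
  have hint : Integrable (fun z : ℝ => (1 / ((x : ℂ) - Complex.I * ((w - z : ℝ) : ℂ)))
      * (Real.exp (-(z ^ 2) / (4 * t)) : ℂ)) := by
    refine Integrable.mono' ((gauss_int ht).const_mul (1 / x)) ?_ (ae_of_all _ fun z => ?_)
    · apply Measurable.aestronglyMeasurable
      fun_prop
    · rw [norm_mul, Complex.norm_real, Real.norm_of_nonneg (Real.exp_pos _).le]
      gcongr
      rw [norm_div, norm_one]
      apply one_div_le_one_div_of_le hx
      have := Complex.re_le_norm ((x : ℂ) - Complex.I * ((w - z : ℝ) : ℂ))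
      simpa using this
  have := integral_im hint
  simp only [RCLike.im_eq_complex_im] at this
  rw [← this]
  refine integral_congr_ae (ae_of_all _ fun z => ?_)
  simp only [Complex.im_mul_ofReal, hp]

lemma FF_cont_ζ (n : ℕ) {t : ℝ} (ht : 0 < t) : Continuous fun ζ : ℂ => FF n ζ t := by
  rw [continuous_iff_continuousAt]
  exact fun ζ => (FF_hasDerivAt_ζ n ζ t (by simpa using ht)).continuousAt

lemma JJ_ftc {x t : ℝ} (w : ℝ) (hx : 0 < x) (ht : 0 < t) :
    ∫ v in (0:ℝ)..w, √(4 * Real.pi * t) * (FF 0 ((x : ℂ) - Complex.I * (v : ℂ)) t).im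
      = JJ x t w - JJ x t 0 := by
  apply intervalIntegral.integral_eq_sub_of_hasDerivAt
  · intro v _
    rw [← fubini_im v hx ht]
    exact JJ_deriv_pos v hx ht
  · apply Continuous.intervalIntegrable
    have := FF_cont_ζ 0 ht
    fun_prop

lemma JJ_tendsto {t : ℝ} (w : ℝ) (ht : 0 < t) :
    Tendsto (fun x => JJ x t w) (𝓝[>] 0) (𝓝 (JJ 0 t w)) := by
  unfold JJ
  have h1 : ∀ᶠ x : ℝ in 𝓝[>] 0, 0 < x := eventually_mem_nhdsWithin
  have h2 : ∀ᶠ x : ℝ in 𝓝[>] 0, x < 1 := nhdsWithin_le_nhds (gt_mem_nhds one_pos)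
  refine tendsto_integral_filter_of_dominated_convergence
    (fun z : ℝ => (|Real.log (w - z)| + |w - z| + 1) * Real.exp (-(z ^ 2) / (4 * t))) ?_ ?_
    (dom_int w 1 ht) ?_
  · exact Eventually.of_forall fun x => logint_meas x w t
  · filter_upwards [h1, h2] with x hx1 hx2
    exact logint_bd w t hx1.le hx2.le
  · filter_upwards [ae_ne_sub w] with z hz
    apply Tendsto.mul_const
    apply Tendsto.mono_left _ nhdsWithin_le_nhds
    have : ContinuousAt (fun x : ℝ => Real.log (√((w - z) ^ 2 + x ^ 2))) 0 := by
      apply ContinuousAt.log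
      · fun_prop
      · have : 0 < (w - z) ^ 2 + 0 ^ 2 := by positivity
        positivity
    exact this

lemma JJ_ftc' {x t : ℝ} (w : ℝ) (hx : 0 ≤ x) (ht : 0 < t) :
    ∫ v in (0:ℝ)..w, √(4 * Real.pi * t) * (FF 0 ((x : ℂ) - Complex.I * (v : ℂ)) t).im
      = JJ x t w - JJ x t 0 := by
  rcases hx.eq_or_lt with rfl | hx
  swap
  · exact JJ_ftc w hx ht
  have h1 : ∀ᶠ x : ℝ in 𝓝[>] 0, 0 < x := eventually_mem_nhdsWithin
  have hR := (JJ_tendsto w ht).sub (JJ_tendsto 0 ht)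
  obtain ⟨C, hC, hb⟩ := FF_bound0 0
  have hc := FF_cont_ζ 0 ht
  have hL : Tendsto (fun x : ℝ => ∫ v in (0:ℝ)..w,
      √(4 * Real.pi * t) * (FF 0 ((x : ℂ) - Complex.I * (v : ℂ)) t).im) (𝓝[>] 0)
      (𝓝 (∫ v in (0:ℝ)..w,
      √(4 * Real.pi * t) * (FF 0 (((0:ℝ) : ℂ) - Complex.I * (v : ℂ)) t).im)) := by
    refine intervalIntegral.tendsto_integral_filter_of_dominated_convergence
      (fun _ => √(4 * Real.pi * t) * (C / √t)) ?_ ?_ ?_ ?_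
    · refine Eventually.of_forall fun x => Continuous.aestronglyMeasurable ?_
      fun_prop
    · filter_upwards [h1] with x hx
      refine ae_of_all _ fun v _ => ?_
      rw [norm_mul, Real.norm_of_nonneg (Real.sqrt_nonneg _)]
      gcongr
      refine (Complex.abs_im_le_norm _).trans ?_
      rw [le_div_iff₀ (by positivity)]
      have := hb ((x : ℂ) - Complex.I * (v : ℂ)) t (by simpa using hx.le) ht
      rw [mul_comm]
      simpa using this
    · simp
    · refine ae_of_all _ fun v _ => ?_
      apply Tendsto.mono_left _ nhdsWithin_le_nhds
      have : Continuous fun x : ℝ =>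
        √(4 * Real.pi * t) * (FF 0 ((x : ℂ) - Complex.I * (v : ℂ)) t).im := by fun_prop
      exact this.tendsto 0
  refine tendsto_nhds_unique hL (hR.congr' ?_)
  filter_upwards [h1] with x hx
  exact (JJ_ftc w hx ht).symm

lemma JJ_deriv {x t : ℝ} (w : ℝ) (hx : 0 ≤ x) (ht : 0 < t) :
    HasDerivAt (JJ x t) (√(4 * Real.pi * t) * (FF 0 ((x : ℂ) - Complex.I * (w : ℂ)) t).im) w := by
  have hc := FF_cont_ζ 0 ht
  have hcont : Continuous fun v : ℝ =>
      √(4 * Real.pi * t) * (FF 0 ((x : ℂ) - Complex.I * (v : ℂ)) t).im := by fun_prop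
  have h := (hcont.integral_hasStrictDerivAt 0 w).hasDerivAt.add_const (JJ x t 0)
  have e : (fun u => (∫ v in (0:ℝ)..u,
      √(4 * Real.pi * t) * (FF 0 ((x : ℂ) - Complex.I * (v : ℂ)) t).im) + JJ x t 0) = JJ x t := by
    funext u
    rw [JJ_ftc' u hx ht]; ring
  rwa [e] at h

/-- Basic building blocks. -/
noncomputable def gB (a : ℕ) (r : ℝ) (n : ℕ) : ℝ → ℝ → ℝ → ℝ → ℝ → ℂ :=
  fun x₁ x₂ y₁ y₂ t => ((y₂ ^ a * t ^ r * Real.exp (-(y₂ ^ 2) / (4 * t)) : ℝ) : ℂ) *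
    FF n ((x₂ : ℂ) - Complex.I * ((x₁ - y₁ : ℝ) : ℂ)) t

/-- Generators. -/
def gS (N : ℕ) (κ : ℝ) : Set (ℝ → ℝ → ℝ → ℝ → ℝ → ℂ) :=
  {f | ∃ (a : ℕ) (r : ℝ) (n : ℕ), N ≤ n ∧ (a:ℝ) / 2 + r - ((n:ℝ) - N) / 2 = κ ∧ f = gB a r n}

lemma gB_mem {N : ℕ} {κ : ℝ} (a : ℕ) (r : ℝ) (n : ℕ) (h : N ≤ n)
    (h2 : (a:ℝ) / 2 + r - ((n:ℝ) - N) / 2 = κ) : gB a r n ∈ Submodule.span ℂ (gS N κ) :=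
  Submodule.subset_span ⟨a, r, n, h, h2, rfl⟩

lemma span_step {V : Type*} [AddCommGroup V] [Module ℂ V] {S S' : Set V} (R : V → V → Prop)
    (h0 : R 0 0) (hadd : ∀ f f' g g', R f f' → R g g' → R (f + g) (f' + g'))
    (hsmul : ∀ (c : ℂ) f f', R f f' → R (c • f) (c • f'))
    (hgen : ∀ f ∈ S, ∃ f' ∈ Submodule.span ℂ S', R f f') :
    ∀ f ∈ Submodule.span ℂ S, ∃ f' ∈ Submodule.span ℂ S', R f f' := by
  intro f hf
  induction hf using Submodule.span_induction with
  | mem x h => exact hgen x h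
  | zero => exact ⟨0, Submodule.zero_mem _, h0⟩
  | add x y _ _ hx hy =>
    obtain ⟨x', hx', hx⟩ := hx
    obtain ⟨y', hy', hy⟩ := hy
    exact ⟨x' + y', Submodule.add_mem _ hx' hy', hadd _ _ _ _ hx hy⟩
  | smul c x _ hx =>
    obtain ⟨x', hx', hx⟩ := hx
    exact ⟨c • x', Submodule.smul_mem _ _ hx', hsmul _ _ _ hx⟩

lemma step_x1 {N : ℕ} {κ : ℝ} : ∀ f ∈ Submodule.span ℂ (gS N κ),
    ∃ f' ∈ Submodule.span ℂ (gS (N+1) κ), ∀ x₁ x₂ y₁ y₂ t : ℝ, 0 < t →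
      HasDerivAt (fun s => f s x₂ y₁ y₂ t) (f' x₁ x₂ y₁ y₂ t) x₁ := by
  refine span_step _ ?_ ?_ ?_ ?_
  · intro x₁ x₂ y₁ y₂ t _
    exact hasDerivAt_const _ _
  · intro f f' g g' hf hg x₁ x₂ y₁ y₂ t ht
    exact (hf x₁ x₂ y₁ y₂ t ht).add (hg x₁ x₂ y₁ y₂ t ht)
  · intro c f f' hf x₁ x₂ y₁ y₂ t ht
    exact (hf x₁ x₂ y₁ y₂ t ht).const_smul c
  · rintro f ⟨a, r, n, hn, hr, rfl⟩
    refine ⟨Complex.I • gB a r (n+1), Submodule.smul_mem _ _ (gB_mem _ _ _ (by omega)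
      (by rw [← hr]; push_cast; ring)), ?_⟩
    intro x₁ x₂ y₁ y₂ t ht
    have h1 : HasDerivAt (fun s : ℝ => (x₂ : ℂ) - Complex.I * ((s - y₁ : ℝ) : ℂ)) (-Complex.I) x₁ :=
      ((((hasDerivAt_id x₁).sub_const y₁).ofReal_comp.const_mul Complex.I).const_sub
        (x₂ : ℂ)).congr_deriv (by simp)
    have h2 := (FF_hasDerivAt_ζ n ((x₂ : ℂ) - Complex.I * ((x₁ - y₁ : ℝ) : ℂ)) t
      (by simpa using ht)).comp x₁ h1
    refine (h2.const_mul _).congr_deriv ?_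
    simp only [gB, Pi.smul_apply, smul_eq_mul]
    ring

lemma step_y1 {N : ℕ} {κ : ℝ} : ∀ f ∈ Submodule.span ℂ (gS N κ),
    ∃ f' ∈ Submodule.span ℂ (gS (N+1) κ), ∀ x₁ x₂ y₁ y₂ t : ℝ, 0 < t →
      HasDerivAt (fun s => f x₁ x₂ s y₂ t) (f' x₁ x₂ y₁ y₂ t) y₁ := by
  refine span_step _ ?_ ?_ ?_ ?_
  · intro x₁ x₂ y₁ y₂ t _
    exact hasDerivAt_const _ _
  · intro f f' g g' hf hg x₁ x₂ y₁ y₂ t ht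
    exact (hf x₁ x₂ y₁ y₂ t ht).add (hg x₁ x₂ y₁ y₂ t ht)
  · intro c f f' hf x₁ x₂ y₁ y₂ t ht
    exact (hf x₁ x₂ y₁ y₂ t ht).const_smul c
  · rintro f ⟨a, r, n, hn, hr, rfl⟩
    refine ⟨(-Complex.I) • gB a r (n+1), Submodule.smul_mem _ _ (gB_mem _ _ _ (by omega)
      (by rw [← hr]; push_cast; ring)), ?_⟩
    intro x₁ x₂ y₁ y₂ t ht
    have h1 : HasDerivAt (fun s : ℝ => (x₂ : ℂ) - Complex.I * ((x₁ - s : ℝ) : ℂ)) (Complex.I) y₁ :=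
      ((((hasDerivAt_id y₁).const_sub x₁).ofReal_comp.const_mul Complex.I).const_sub
        (x₂ : ℂ)).congr_deriv (by simp)
    have h2 := (FF_hasDerivAt_ζ n ((x₂ : ℂ) - Complex.I * ((x₁ - y₁ : ℝ) : ℂ)) t
      (by simpa using ht)).comp y₁ h1
    refine (h2.const_mul _).congr_deriv ?_
    simp only [gB, Pi.smul_apply, smul_eq_mul]
    ring

lemma step_x2 {N : ℕ} {κ : ℝ} : ∀ f ∈ Submodule.span ℂ (gS N κ),
    ∃ f' ∈ Submodule.span ℂ (gS (N+1) κ), ∀ x₁ x₂ y₁ y₂ t : ℝ, 0 < t →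
      HasDerivAt (fun s => f x₁ s y₁ y₂ t) (f' x₁ x₂ y₁ y₂ t) x₂ := by
  refine span_step _ ?_ ?_ ?_ ?_
  · intro x₁ x₂ y₁ y₂ t _
    exact hasDerivAt_const _ _
  · intro f f' g g' hf hg x₁ x₂ y₁ y₂ t ht
    exact (hf x₁ x₂ y₁ y₂ t ht).add (hg x₁ x₂ y₁ y₂ t ht)
  · intro c f f' hf x₁ x₂ y₁ y₂ t ht
    exact (hf x₁ x₂ y₁ y₂ t ht).const_smul c
  · rintro f ⟨a, r, n, hn, hr, rfl⟩
    refine ⟨(-1 : ℂ) • gB a r (n+1), Submodule.smul_mem _ _ (gB_mem _ _ _ (by omega)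
      (by rw [← hr]; push_cast; ring)), ?_⟩
    intro x₁ x₂ y₁ y₂ t ht
    have h1 : HasDerivAt (fun s : ℝ => (s : ℂ) - Complex.I * ((x₁ - y₁ : ℝ) : ℂ)) 1 x₂ :=
      ((hasDerivAt_id x₂).ofReal_comp.sub_const _).congr_deriv (by simp)
    have h2 := (FF_hasDerivAt_ζ n ((x₂ : ℂ) - Complex.I * ((x₁ - y₁ : ℝ) : ℂ)) t
      (by simpa using ht)).comp x₂ h1
    refine (h2.const_mul _).congr_deriv ?_
    simp only [gB, Pi.smul_apply, smul_eq_mul]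
    ring

lemma step_y2 {N : ℕ} {κ : ℝ} : ∀ f ∈ Submodule.span ℂ (gS N κ),
    ∃ f' ∈ Submodule.span ℂ (gS N (κ - 1 / 2)), ∀ x₁ x₂ y₁ y₂ t : ℝ, 0 < t →
      HasDerivAt (fun s => f x₁ x₂ y₁ s t) (f' x₁ x₂ y₁ y₂ t) y₂ := by
  refine span_step _ ?_ ?_ ?_ ?_
  · intro x₁ x₂ y₁ y₂ t _
    exact hasDerivAt_const _ _
  · intro f f' g g' hf hg x₁ x₂ y₁ y₂ t ht
    exact (hf x₁ x₂ y₁ y₂ t ht).add (hg x₁ x₂ y₁ y₂ t ht)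
  · intro c f f' hf x₁ x₂ y₁ y₂ t ht
    exact (hf x₁ x₂ y₁ y₂ t ht).const_smul c
  · rintro f ⟨a, r, n, hn, hr, rfl⟩
    have hE : ∀ y₂ t : ℝ, 0 < t → HasDerivAt (fun s : ℝ => Real.exp (-(s ^ 2) / (4 * t)))
        (-(1 / 2) * y₂ * t⁻¹ * Real.exp (-(y₂ ^ 2) / (4 * t))) y₂ := by
      intro y₂ t ht
      have h1 : HasDerivAt (fun s : ℝ => -(s ^ 2) / (4 * t)) (-(2 * y₂) / (4 * t)) y₂ :=
        ((hasDerivAt_pow 2 y₂).neg.div_const _).congr_deriv (by simp)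
      exact h1.exp.congr_deriv (by field_simp; ring)
    rcases a with _ | a
    · refine ⟨(-(1 / 2) : ℂ) • gB 1 (r - 1) n, Submodule.smul_mem _ _ (gB_mem _ _ _ hn
        (by rw [← hr]; push_cast; ring)), ?_⟩
      intro x₁ x₂ y₁ y₂ t ht
      have h2 := (((hE y₂ t ht).const_mul (y₂ ^ 0 * t ^ r)).ofReal_comp).mul_const
        (FF n ((x₂ : ℂ) - Complex.I * ((x₁ - y₁ : ℝ) : ℂ)) t)
      simp only [pow_zero] at h2
      unfold gB
      simp only [pow_zero]
      refine h2.congr_deriv ?_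
      simp only [Pi.smul_apply, smul_eq_mul]
      rw [Real.rpow_sub_one ht.ne']
      push_cast
      ring
    · refine ⟨((a + 1 : ℕ) : ℂ) • gB a r n + (-(1 / 2) : ℂ) • gB (a + 2) (r - 1) n,
        Submodule.add_mem _ (Submodule.smul_mem _ _ (gB_mem _ _ _ hn
        (by rw [← hr]; push_cast; ring))) (Submodule.smul_mem _ _ (gB_mem _ _ _ hn
        (by rw [← hr]; push_cast; ring))), ?_⟩
      intro x₁ x₂ y₁ y₂ t ht
      have h2 := ((((hasDerivAt_pow (a+1) y₂).mul_const (t ^ r)).mul (hE y₂ t ht)).ofReal_comp).mul_const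
        (FF n ((x₂ : ℂ) - Complex.I * ((x₁ - y₁ : ℝ) : ℂ)) t)
      refine h2.congr_deriv ?_
      simp only [gB, Pi.smul_apply, Pi.add_apply, smul_eq_mul]
      rw [Real.rpow_sub_one ht.ne']
      push_cast
      simp
      ring

lemma step_t {N : ℕ} {κ : ℝ} : ∀ f ∈ Submodule.span ℂ (gS N κ),
    ∃ f' ∈ Submodule.span ℂ (gS N (κ - 1)), ∀ x₁ x₂ y₁ y₂ t : ℝ, 0 < t →
      HasDerivAt (fun s => f x₁ x₂ y₁ y₂ s) (f' x₁ x₂ y₁ y₂ t) t := by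
  refine span_step _ ?_ ?_ ?_ ?_
  · intro x₁ x₂ y₁ y₂ t _
    exact hasDerivAt_const _ _
  · intro f f' g g' hf hg x₁ x₂ y₁ y₂ t ht
    exact (hf x₁ x₂ y₁ y₂ t ht).add (hg x₁ x₂ y₁ y₂ t ht)
  · intro c f f' hf x₁ x₂ y₁ y₂ t ht
    exact (hf x₁ x₂ y₁ y₂ t ht).const_smul c
  · rintro f ⟨a, r, n, hn, hr, rfl⟩
    refine ⟨(r : ℂ) • gB a (r - 1) n + ((1 / 4 : ℂ) • gB (a + 2) (r - 2) n +
        (-1 : ℂ) • gB a r (n + 2)), ?_, ?_⟩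
    · refine Submodule.add_mem _ (Submodule.smul_mem _ _ (gB_mem _ _ _ hn ?_))
        (Submodule.add_mem _ (Submodule.smul_mem _ _ (gB_mem _ _ _ hn ?_))
          (Submodule.smul_mem _ _ (gB_mem _ _ _ (by omega) ?_)))
      all_goals rw [← hr]; push_cast; ring
    intro x₁ x₂ y₁ y₂ t ht
    have hE : HasDerivAt (fun s : ℝ => Real.exp (-(y₂ ^ 2) / (4 * s)))
        (1 / 4 * y₂ ^ 2 * (t ^ 2)⁻¹ * Real.exp (-(y₂ ^ 2) / (4 * t))) t := by
      have h1 : HasDerivAt (fun s : ℝ => -(y₂ ^ 2) / (4 * s)) (1 / 4 * y₂ ^ 2 * (t ^ 2)⁻¹) t := by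
        have := (hasDerivAt_inv ht.ne').const_mul (-(y₂ ^ 2) / 4)
        have e : (fun s : ℝ => -(y₂ ^ 2) / (4 * s)) = fun s => -(y₂ ^ 2) / 4 * s⁻¹ := by
          funext s; rw [div_mul_eq_div_div, div_eq_mul_inv _ s]
        rw [e]
        exact this.congr_deriv (by ring)
      exact h1.exp.congr_deriv (by ring)
    have hp : HasDerivAt (fun s : ℝ => s ^ r) (r * t ^ (r - 1)) t :=
      Real.hasDerivAt_rpow_const (Or.inl ht.ne')
    have hF := (FF_hasDerivAt_τ n ((x₂ : ℂ) - Complex.I * ((x₁ - y₁ : ℝ) : ℂ)) t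
      (by simpa using ht)).comp_ofReal
    have h2 := (((hp.const_mul (y₂ ^ a)).mul hE).ofReal_comp).mul hF
    refine h2.congr_deriv ?_
    simp only [gB, Pi.smul_apply, Pi.add_apply, Pi.mul_apply, smul_eq_mul]
    rw [show r - 2 = r - 1 - 1 by ring, Real.rpow_sub_one ht.ne' (r-1), Real.rpow_sub_one ht.ne' r]
    have ht' : (t:ℂ) ≠ 0 := by exact_mod_cast ht.ne'
    push_cast
    field_simp
    ring

lemma poly_exp (M : ℕ) : ∃ C > (0:ℝ), ∀ u : ℝ, 0 ≤ u →
    (1 + u) ^ M ≤ C * Real.exp (3 / 16 * u) := by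
  refine ⟨(16 / 3) ^ M * M.factorial * Real.exp (3 / 16), by positivity, fun u hu => ?_⟩
  have h := Real.pow_div_factorial_le_exp (3 / 16 * (1 + u)) (by positivity) M
  rw [div_le_iff₀ (by positivity), mul_pow] at h
  have e : Real.exp (3 / 16 * (1 + u)) = Real.exp (3 / 16) * Real.exp (3 / 16 * u) := by
    rw [← Real.exp_add]; ring_nf
  rw [e] at h
  have hk : ((16:ℝ) / 3) ^ M * (3 / 16) ^ M = 1 := by
    rw [← mul_pow]; norm_num
  calc (1 + u) ^ M = (16 / 3) ^ M * ((3 / 16) ^ M * (1 + u) ^ M) := by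
        rw [← mul_assoc, hk, one_mul]
    _ ≤ (16 / 3) ^ M * (Real.exp (3 / 16) * Real.exp (3 / 16 * u) * M.factorial) := by gcongr
    _ = _ := by ring

lemma gB_bound {N : ℕ} {κ : ℝ} (a : ℕ) (r : ℝ) (n : ℕ) (hn : N ≤ n)
    (hr : (a:ℝ) / 2 + r - ((n:ℝ) - N) / 2 = κ) : ∃ C ≥ (0:ℝ), ∀ x₁ x₂ y₁ y₂ t : ℝ,
      0 ≤ x₂ → 0 < y₂ → 0 < t → ‖gB a r n x₁ x₂ y₁ y₂ t‖ ≤ C * t ^ κ *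
        ((x₁ - y₁) ^ 2 + (x₂ + y₂) ^ 2 + t) ^ (-((1 + (N:ℝ)) / 2)) *
          Real.exp (-(1 / 16) * y₂ ^ 2 / t) := by
  obtain ⟨C1, hC1, h1⟩ := FF_bound n
  obtain ⟨C2, hC2, h2⟩ := poly_exp (a + (n + 1))
  refine ⟨C1 * C2 * 2 ^ (n+1), by positivity, fun x₁ x₂ y₁ y₂ t hx hy ht => ?_⟩
  have hre : 0 ≤ ((x₂ : ℂ) - Complex.I * ((x₁ - y₁ : ℝ) : ℂ)).re := by simpa using hx
  have b1 := h1 _ t hre ht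
  have hz : ‖(x₂ : ℂ) - Complex.I * ((x₁ - y₁ : ℝ) : ℂ)‖ ^ 2 = x₂ ^ 2 + (x₁ - y₁) ^ 2 := by
    rw [← Complex.normSq_eq_norm_sq, Complex.normSq_apply]
    simp
    ring
  rw [hz] at b1
  set X := (x₁ - y₁) ^ 2 + (x₂ + y₂) ^ 2 + t with hX
  set Z := x₂ ^ 2 + (x₁ - y₁) ^ 2 + t with hZ
  have hXt : t ≤ X := by rw [hX]; nlinarith [sq_nonneg (x₁ - y₁), sq_nonneg (x₂ + y₂)]
  have hX0 : 0 < X := lt_of_lt_of_le ht hXt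
  have hZt : t ≤ Z := by rw [hZ]; nlinarith [sq_nonneg (x₁ - y₁), sq_nonneg x₂]
  have hZ0 : 0 < Z := lt_of_lt_of_le ht hZt
  set u := y₂ ^ 2 / t with hu
  have hu0 : 0 < u := by positivity
  have hyu : y₂ ^ 2 = u * t := by rw [hu]; field_simp
  have hXZ : X ≤ 2 * (1 + u) * Z := by
    have : u * t ≤ u * Z := by gcongr
    nlinarith [sq_nonneg (x₁ - y₁), sq_nonneg (x₂ - y₂)]
  -- Z power
  have hp1 : Z ^ (-(((n:ℝ) + 1) / 2)) ≤ 2 ^ (n+1) * (1 + u) ^ (n+1) * X ^ (-(((n:ℝ) + 1) / 2)) := by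
    have hc : (1:ℝ) ≤ 2 * (1 + u) := by linarith
    have q1 : X ^ (((n:ℝ) + 1) / 2) ≤ (2 * (1 + u)) ^ (n+1) * Z ^ (((n:ℝ) + 1) / 2) := by
      calc X ^ (((n:ℝ) + 1) / 2) ≤ (2 * (1 + u) * Z) ^ (((n:ℝ) + 1) / 2) := by
            gcongr
        _ = (2 * (1 + u)) ^ (((n:ℝ) + 1) / 2) * Z ^ (((n:ℝ) + 1) / 2) :=
            Real.mul_rpow (by positivity) hZ0.le
        _ ≤ _ := by
            gcongr
            rw [← Real.rpow_natCast]
            apply Real.rpow_le_rpow_of_exponent_le hc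
            push_cast
            have := Nat.cast_nonneg (α := ℝ) n
            linarith
    rw [mul_pow] at q1
    rw [Real.rpow_neg hZ0.le, Real.rpow_neg hX0.le, ← div_eq_mul_inv, le_div_iff₀ (by positivity),
      inv_mul_eq_div, div_le_iff₀ (by positivity)]
    exact q1
  have hp2 : X ^ (-(((n:ℝ) + 1) / 2)) ≤ t ^ (-(((n:ℝ) - N) / 2)) * X ^ (-((1 + (N:ℝ)) / 2)) := by
    have : -(((n:ℝ) + 1) / 2) = -(((n:ℝ) - N) / 2) + -((1 + (N:ℝ)) / 2) := by ring
    rw [this, Real.rpow_add hX0]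
    refine mul_le_mul_of_nonneg_right ?_ (by positivity)
    apply Real.rpow_le_rpow_of_nonpos ht hXt
    have : (N:ℝ) ≤ n := by exact_mod_cast hn
    linarith
  have hya : y₂ ^ a ≤ t ^ ((a:ℝ) / 2) * (1 + u) ^ a := by
    have e1 : y₂ = t ^ ((1:ℝ) / 2) * √u := by
      rw [← Real.sqrt_eq_rpow, ← Real.sqrt_mul ht.le, mul_comm, ← hyu, Real.sqrt_sq hy.le]
    have e2 : √u ≤ 1 + u := Real.sqrt_le_iff.2 ⟨by positivity, by nlinarith⟩
    calc y₂ ^ a = (t ^ ((1:ℝ) / 2)) ^ a * √u ^ a := by rw [← mul_pow, ← e1]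
      _ = t ^ ((a:ℝ) / 2) * √u ^ a := by
        rw [← Real.rpow_natCast, ← Real.rpow_mul ht.le]; ring_nf
      _ ≤ _ := by gcongr
  have hexp : Real.exp (-(y₂ ^ 2) / (4 * t)) = Real.exp (-(1/4) * u) := by
    rw [hu]; congr 1; field_simp
  have hexp2 : Real.exp (-(1 / 16) * y₂ ^ 2 / t) = Real.exp (3 / 16 * u) * Real.exp (-(1/4) * u) := by
    rw [← Real.exp_add, hu]; congr 1; field_simp; ring
  have b2 := h2 u hu0.le
  rw [hexp2]
  unfold gB
  rw [norm_mul, Complex.norm_real, Real.norm_of_nonneg (by positivity), hexp]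
  have ht3 : t ^ κ = t ^ ((a:ℝ) / 2) * t ^ r * t ^ (-(((n:ℝ) - N) / 2)) := by
    rw [← Real.rpow_add ht, ← Real.rpow_add ht, ← hr]; congr 1
  calc y₂ ^ a * t ^ r * Real.exp (-(1/4) * u) * ‖FF n ((x₂ : ℂ) - Complex.I * ((x₁ - y₁ : ℝ) : ℂ)) t‖
      ≤ (t ^ ((a:ℝ) / 2) * (1 + u) ^ a) * t ^ r * Real.exp (-(1/4) * u) *
        (C1 * (2 ^ (n+1) * (1 + u) ^ (n+1) *
          (t ^ (-(((n:ℝ) - N) / 2)) * X ^ (-((1 + (N:ℝ)) / 2))))) := by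
        gcongr
        refine b1.trans ?_
        gcongr
        refine hp1.trans ?_
        gcongr
    _ = C1 * 2 ^ (n+1) * (1 + u) ^ (a + (n+1)) * t ^ κ * X ^ (-((1 + (N:ℝ)) / 2)) *
          Real.exp (-(1/4) * u) := by
        rw [ht3, pow_add (1 + u) a (n+1)]; ring
    _ ≤ C1 * 2 ^ (n+1) * (C2 * Real.exp (3 / 16 * u)) * t ^ κ * X ^ (-((1 + (N:ℝ)) / 2)) *
          Real.exp (-(1/4) * u) := by gcongr
    _ = _ := by ring

lemma span_bound {N : ℕ} {κ : ℝ} : ∀ f ∈ Submodule.span ℂ (gS N κ), ∃ C ≥ (0:ℝ),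
    ∀ x₁ x₂ y₁ y₂ t : ℝ,
      0 ≤ x₂ → 0 < y₂ → 0 < t → ‖f x₁ x₂ y₁ y₂ t‖ ≤ C * t ^ κ *
        ((x₁ - y₁) ^ 2 + (x₂ + y₂) ^ 2 + t) ^ (-((1 + (N:ℝ)) / 2)) *
          Real.exp (-(1 / 16) * y₂ ^ 2 / t) := by
  intro f hf
  induction hf using Submodule.span_induction with
  | mem x h =>
    obtain ⟨a, r, n, hn, hr, rfl⟩ := h
    exact gB_bound a r n hn hr
  | zero => exact ⟨0, le_rfl, fun x₁ x₂ y₁ y₂ t _ _ _ => by simp⟩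
  | add f g _ _ hf hg =>
    obtain ⟨C1, hC1, h1⟩ := hf
    obtain ⟨C2, hC2, h2⟩ := hg
    refine ⟨C1 + C2, by positivity, fun x₁ x₂ y₁ y₂ t hx hy ht => ?_⟩
    refine (norm_add_le _ _).trans ?_
    have b1 := h1 x₁ x₂ y₁ y₂ t hx hy ht
    have b2 := h2 x₁ x₂ y₁ y₂ t hx hy ht
    linarith
  | smul c f _ hf =>
    obtain ⟨C1, hC1, h1⟩ := hf
    refine ⟨‖c‖ * C1, by positivity, fun x₁ x₂ y₁ y₂ t hx hy ht => ?_⟩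
    have b1 := h1 x₁ x₂ y₁ y₂ t hx hy ht
    calc ‖(c • f) x₁ x₂ y₁ y₂ t‖ = ‖c‖ * ‖f x₁ x₂ y₁ y₂ t‖ := norm_mul _ _
      _ ≤ ‖c‖ * _ := mul_le_mul_of_nonneg_left b1 (norm_nonneg c)
      _ = _ := by ring

/-- `v` agrees on the domain, up to spurious zeros, with the real part of an element of the
span of the building blocks. -/
def GoodF (v : ℝ → ℝ → ℝ → ℝ → ℝ → ℝ) (N : ℕ) (κ : ℝ) : Prop :=
  ∃ f ∈ Submodule.span ℂ (gS N κ), ∀ x₁ x₂ y₁ y₂ t : ℝ, 0 ≤ x₂ → 0 < y₂ → 0 < t →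
    v x₁ x₂ y₁ y₂ t = 0 ∨ v x₁ x₂ y₁ y₂ t = (f x₁ x₂ y₁ y₂ t).re

lemma hasDerivAt_re {g : ℝ → ℂ} {g' : ℂ} {x : ℝ} (h : HasDerivAt g g' x) :
    HasDerivAt (fun s => (g s).re) g'.re x := by
  have := (Complex.reCLM.hasFDerivAt (x := g x)).comp_hasDerivAt x h
  exact this

lemma GoodF.dx1 {v N κ} (h : GoodF v N κ) : GoodF (DX1 v) (N+1) κ := by
  obtain ⟨f, hf, hv⟩ := h
  obtain ⟨f', hf', hd⟩ := step_x1 f hf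
  exact ⟨f', hf', fun x₁ x₂ y₁ y₂ t hx hy ht =>
    junk_deriv (fun s _ => hv s x₂ y₁ y₂ t hx hy ht) (hasDerivAt_re (hd x₁ x₂ y₁ y₂ t ht))⟩

lemma GoodF.dx2 {v N κ} (h : GoodF v N κ) : GoodF (DX2 v) (N+1) κ := by
  obtain ⟨f, hf, hv⟩ := h
  obtain ⟨f', hf', hd⟩ := step_x2 f hf
  exact ⟨f', hf', fun x₁ x₂ y₁ y₂ t hx hy ht =>
    junk_deriv (fun s hs => hv x₁ s y₁ y₂ t (hx.trans hs) hy ht)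
      (hasDerivAt_re (hd x₁ x₂ y₁ y₂ t ht))⟩

lemma GoodF.dy1 {v N κ} (h : GoodF v N κ) : GoodF (DY1 v) (N+1) κ := by
  obtain ⟨f, hf, hv⟩ := h
  obtain ⟨f', hf', hd⟩ := step_y1 f hf
  exact ⟨f', hf', fun x₁ x₂ y₁ y₂ t hx hy ht =>
    junk_deriv (fun s _ => hv x₁ x₂ s y₂ t hx hy ht) (hasDerivAt_re (hd x₁ x₂ y₁ y₂ t ht))⟩

lemma GoodF.dy2 {v N κ} (h : GoodF v N κ) : GoodF (DY2 v) N (κ - 1 / 2) := by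
  obtain ⟨f, hf, hv⟩ := h
  obtain ⟨f', hf', hd⟩ := step_y2 f hf
  exact ⟨f', hf', fun x₁ x₂ y₁ y₂ t hx hy ht =>
    junk_deriv (fun s hs => hv x₁ x₂ y₁ s t hx (hy.trans_le hs) ht)
      (hasDerivAt_re (hd x₁ x₂ y₁ y₂ t ht))⟩

lemma GoodF.dt {v N κ} (h : GoodF v N κ) : GoodF (DT v) N (κ - 1) := by
  obtain ⟨f, hf, hv⟩ := h
  obtain ⟨f', hf', hd⟩ := step_t f hf
  exact ⟨f', hf', fun x₁ x₂ y₁ y₂ t hx hy ht =>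
    junk_deriv (fun s hs => hv x₁ x₂ y₁ y₂ s hx hy (ht.trans_le hs))
      (hasDerivAt_re (hd x₁ x₂ y₁ y₂ t ht))⟩

lemma iter_N {D : (ℝ → ℝ → ℝ → ℝ → ℝ → ℝ) → ℝ → ℝ → ℝ → ℝ → ℝ → ℝ}
    (hD : ∀ {v N κ}, GoodF v N κ → GoodF (D v) (N+1) κ) {v N κ} (k : ℕ) (h : GoodF v N κ) :
    GoodF (D^[k] v) (N+k) κ := by
  induction k with
  | zero => exact h
  | succ k ih =>
    rw [Function.iterate_succ_apply']
    exact hD ih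

lemma iter_κ {D : (ℝ → ℝ → ℝ → ℝ → ℝ → ℝ) → ℝ → ℝ → ℝ → ℝ → ℝ → ℝ} (δ : ℝ)
    (hD : ∀ {v N κ}, GoodF v N κ → GoodF (D v) N (κ - δ)) {v N κ} (k : ℕ) (h : GoodF v N κ) :
    GoodF (D^[k] v) N (κ - k * δ) := by
  induction k with
  | zero => simpa using h
  | succ k ih =>
    rw [Function.iterate_succ_apply']
    have := hD ih
    rwa [show κ - k * δ - δ = κ - ((k + 1 : ℕ) : ℝ) * δ by push_cast; ring] at this

lemma Pten_eq {x₁ x₂ y₁ y₂ t : ℝ} (hx : 0 ≤ x₂) (ht : 0 < t) :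
    Pten x₁ x₂ y₁ y₂ t = 4 * ((2 * Real.pi)⁻¹ * (4 * Real.pi * t)⁻¹ * (-(y₂ / (2 * t))) *
      Real.exp (-(y₂ ^ 2) / (4 * t)) * (√(4 * Real.pi * t) *
        (FF 0 ((x₂ : ℂ) - Complex.I * ((x₁ - y₁ : ℝ) : ℂ)) t).im)) := by
  have hd : ∀ z : ℝ, deriv (fun b => heatK (z - y₁) b t) y₂ =
      (4 * Real.pi * t)⁻¹ * (-(y₂ / (2 * t))) * Real.exp (-(y₂ ^ 2) / (4 * t)) *
        Real.exp (-((z - y₁) ^ 2) / (4 * t)) := by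
    intro z
    unfold heatK
    have h1 : HasDerivAt (fun b : ℝ => -((z - y₁) ^ 2 + b ^ 2) / (4 * t)) (-(y₂ / (2 * t))) y₂ :=
      ((((hasDerivAt_pow 2 y₂).const_add ((z - y₁) ^ 2)).neg).div_const (4 * t)).congr_deriv
        (by push_cast; field_simp; ring)
    rw [(h1.exp.const_mul _).deriv]
    have : Real.exp (-((z - y₁) ^ 2 + y₂ ^ 2) / (4 * t)) = Real.exp (-(y₂ ^ 2) / (4 * t)) *
        Real.exp (-((z - y₁) ^ 2) / (4 * t)) := by
      rw [← Real.exp_add]; congr 1; ring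
    rw [this]; ring
  unfold Pten
  congr 1
  set c := (2 * Real.pi)⁻¹ * (4 * Real.pi * t)⁻¹ * (-(y₂ / (2 * t))) *
      Real.exp (-(y₂ ^ 2) / (4 * t)) with hc
  have hfun : (fun a => ∫ z₁ : ℝ, Efun2 (a - z₁) x₂ * deriv (fun b => heatK (z₁ - y₁) b t) y₂)
      = fun a => c * JJ x₂ t (a - y₁) := by
    funext a
    rw [← integral_add_right_eq_self _ y₁]
    unfold JJ
    rw [← integral_const_mul]
    congr 1
    funext z
    rw [hd, hc, Efun2, show a - (z + y₁) = a - y₁ - z by ring, add_sub_cancel_right]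
    ring
  rw [hfun]
  have h := ((JJ_deriv (x₁ - y₁) hx ht).comp_sub_const x₁ y₁).const_mul c
  rw [h.deriv]

lemma Pten_good : GoodF Pten 0 (-1) := by
  refine ⟨((4 * ((2 * Real.pi)⁻¹ * (4 * Real.pi)⁻¹ * (1 / 2)) * √(4 * Real.pi) : ℝ) * Complex.I : ℂ) •
    gB 1 (-(3/2)) 0, Submodule.smul_mem _ _ (gB_mem _ _ _ le_rfl (by norm_num)),
    fun x₁ x₂ y₁ y₂ t hx hy ht => Or.inr ?_⟩
  rw [Pten_eq hx ht]
  simp only [gB, Pi.smul_apply, smul_eq_mul]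
  have e : ∀ (A B : ℝ) (z : ℂ), ((A : ℂ) * Complex.I * ((B : ℂ) * z)).re = -(A * B * z.im) := by
    intro A B z
    simp
    ring
  rw [e, Real.sqrt_mul (by positivity) t]
  have ht2 : t ^ (-(3/2) : ℝ) = √t * t⁻¹ * t⁻¹ := by
    rw [Real.sqrt_eq_rpow, ← Real.rpow_neg_one t, ← Real.rpow_add ht, ← Real.rpow_add ht]
    norm_num
  rw [ht2]
  simp only [mul_inv, pow_one, div_eq_mul_inv]
  ring

/-- Pointwise Gaussian-type upper bounds for all space-time derivatives of the pressure
tensor `P₁`: `|∂_t^s D_x^k D_y^m P₁| ≤ C t^{−1−s−m₂/2}(|x−y*|²+t)^{−(1+|k|+|m'|)/2}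
e^{−c y₂²/t}` where `y* = (y₁,−y₂)`. -/
theorem stmt18 :
    ∀ s k₁ k₂ m₁ m₂ : ℕ, ∃ C > (0 : ℝ), ∃ c > (0 : ℝ),
      ∀ x₁ x₂ y₁ y₂ t : ℝ, 0 ≤ x₂ → 0 < y₂ → 0 < t →
        |(DT^[s] (DX1^[k₁] (DX2^[k₂] (DY1^[m₁] (DY2^[m₂] Pten))))) x₁ x₂ y₁ y₂ t|
          ≤ C * t ^ (-1 - (s : ℝ) - (m₂ : ℝ) / 2)
              * ((x₁ - y₁) ^ 2 + (x₂ + y₂) ^ 2 + t)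
                  ^ (-((1 + (k₁ : ℝ) + (k₂ : ℝ) + (m₁ : ℝ)) / 2))
              * Real.exp (-c * y₂ ^ 2 / t) := by

  intro s k₁ k₂ m₁ m₂
  have h1 := iter_κ (D := DY2) (1 / 2) (fun h => h.dy2) m₂ Pten_good
  have h2 := iter_N (D := DX1) (fun h => h.dx1) k₁ (iter_N (D := DX2) (fun h => h.dx2) k₂
    (iter_N (D := DY1) (fun h => h.dy1) m₁ h1))
  obtain ⟨f, hf, hv⟩ := iter_κ (D := DT) 1 (fun h => h.dt) s h2
  obtain ⟨C, hC, hb⟩ := span_bound f hf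
  refine ⟨C + 1, by positivity, 1 / 16, by norm_num, fun x₁ x₂ y₁ y₂ t hx hy ht => ?_⟩
  have b := hb x₁ x₂ y₁ y₂ t hx hy ht
  have e1 : (-1 - (m₂:ℝ) * (1 / 2) - (s:ℝ) * 1) = -1 - (s : ℝ) - (m₂ : ℝ) / 2 := by ring
  have e2 : -((1 + ((0 + m₁ + k₂ + k₁ : ℕ) : ℝ)) / 2) = -((1 + (k₁ : ℝ) + (k₂ : ℝ) + (m₁ : ℝ)) / 2) := by
    push_cast; ring
  rw [e1, e2] at b
  have hX : 0 < (x₁ - y₁) ^ 2 + (x₂ + y₂) ^ 2 + t := by positivity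
  have b' : ‖f x₁ x₂ y₁ y₂ t‖ ≤ (C + 1) * t ^ (-1 - (s : ℝ) - (m₂ : ℝ) / 2)
              * ((x₁ - y₁) ^ 2 + (x₂ + y₂) ^ 2 + t)
                  ^ (-((1 + (k₁ : ℝ) + (k₂ : ℝ) + (m₁ : ℝ)) / 2))
              * Real.exp (-(1 / 16) * y₂ ^ 2 / t) := by
    refine b.trans ?_
    gcongr
    linarith
  rcases hv x₁ x₂ y₁ y₂ t hx hy ht with h | h
  · rw [h, abs_zero]
    exact (norm_nonneg _).trans b'
  · rw [h]
    exact (Complex.abs_re_le_norm _).trans b'
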